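/- arXiv:1708.00291 — 2 statements merged into one kernel-verified Lean document; each statement's English description precedes it below -/
import Mathlib

section
/- For the norm ‖·‖_P on H = {x ∈ ℝ^{n+1} : Σx_i = 0} whose unit ball is the Voronoï region of A_n, m₁(H, ‖·‖_P) = 1/2ⁿ for all n ≥ 2. -/
open MeasureTheory Filter Set Pointwise

noncomputable def box (n : ℕ) (R : ℝ) : Set (Fin n → ℝ) := {x | ∀ i, |x i| ≤ R}

noncomputable def density (n : ℕ) (A : Set (Fin n → ℝ)) : ℝ :=
  Filter.limsup (fun R : ℝ =>
    (volume (A ∩ box n R)).toReal / (volume (box n R)).toReal) Filter.atTop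

def AvoidsOne (n : ℕ) (N : (Fin n → ℝ) → ℝ) (A : Set (Fin n → ℝ)) : Prop :=
  ∀ x ∈ A, ∀ y ∈ A, N (x - y) ≠ 1

noncomputable def m1 (n : ℕ) (N : (Fin n → ℝ) → ℝ) : ℝ :=
  sSup {d : ℝ | ∃ A : Set (Fin n → ℝ), MeasurableSet A ∧ AvoidsOne n N A ∧ d = density n A}

noncomputable def polyNorm (n : ℕ) (P : Set (Fin n → ℝ)) (x : Fin n → ℝ) : ℝ :=
  sInf {l : ℝ | 0 ≤ l ∧ x ∈ l • P}

def IsSymmPolytope (n : ℕ) (P : Set (Fin n → ℝ)) : Prop :=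
  Convex ℝ P ∧ (∀ x ∈ P, -x ∈ P) ∧ ∃ F : Finset (Fin n → ℝ), P = convexHull ℝ (↑F : Set (Fin n → ℝ))

def TilesBy (n : ℕ) (P : Set (Fin n → ℝ)) (Λ : Set (Fin n → ℝ)) : Prop :=
  (⋃ l ∈ Λ, (l +ᵥ P)) = Set.univ ∧
  (Λ.Pairwise fun a b => interior (a +ᵥ P) ∩ interior (b +ᵥ P) = ∅)

/-- The hyperplane `H = {x ∈ ℝ^{n+1} : ∑ xᵢ = 0}`. -/
def Hset (n : ℕ) : Set (Fin (n + 1) → ℝ) := {x | ∑ i, x i = 0}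

theorem osc_le_iff {m : ℕ} (v : Fin (m + 1) → ℝ) (r : ℝ) :
    (⨆ i, v i) - (⨅ i, v i) ≤ r ↔ ∀ i j, v i - v j ≤ r := by
  have hb : BddAbove (Set.range v) := (Set.finite_range v).bddAbove
  have hb' : BddBelow (Set.range v) := (Set.finite_range v).bddBelow
  constructor
  · intro h i j
    have h1 := le_ciSup hb i
    have h2 := ciInf_le hb' j
    linarith
  · intro h
    obtain ⟨i, hi⟩ := exists_eq_ciSup_of_finite (f := v)
    obtain ⟨j, hj⟩ := exists_eq_ciInf_of_finite (f := v)
    rw [← hi, ← hj]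
    exact h i j

theorem osc_lt {m : ℕ} (v : Fin (m + 1) → ℝ) (r : ℝ) (h : ∀ i j, v i - v j < r) :
    (⨆ i, v i) - (⨅ i, v i) < r := by
  obtain ⟨i, hi⟩ := exists_eq_ciSup_of_finite (f := v)
  obtain ⟨j, hj⟩ := exists_eq_ciInf_of_finite (f := v)
  rw [← hi, ← hj]
  exact h i j

theorem le_osc {m : ℕ} (v : Fin (m + 1) → ℝ) (i j : Fin (m + 1)) :
    v i - v j ≤ (⨆ i, v i) - (⨅ i, v i) :=
  (osc_le_iff v _).1 le_rfl i j

theorem osc_eq_one {m : ℕ} (v : Fin (m + 1) → ℝ) (h : ∀ i j, v i - v j ≤ 1)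
    (i j : Fin (m + 1)) (hij : v i - v j = 1) : (⨆ i, v i) - (⨅ i, v i) = 1 :=
  le_antisymm ((osc_le_iff v 1).2 h) (hij ▸ le_osc v i j)

/-- Every point of `H` is within the Voronoi cell of a lattice point of `Aₙ`. -/
theorem cover_An {m : ℕ} (x : Fin (m + 1) → ℝ) (hx : ∑ i, x i = 0) :
    ∃ l : Fin (m + 1) → ℤ, ∑ i, l i = 0 ∧ ∀ i j, (x i - l i) - (x j - l j) ≤ 1 := by
  set k : ℤ := -∑ i, ⌊x i⌋ with hk
  have hkf : (k : ℝ) = ∑ i, Int.fract (x i) := by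
    have : ∑ i, Int.fract (x i) = ∑ i, x i - ∑ i, (⌊x i⌋ : ℝ) := by
      rw [← Finset.sum_sub_distrib]; rfl
    rw [this, hx, hk]; push_cast; ring
  have hk0 : 0 ≤ k := by
    have : (0 : ℝ) ≤ k := by rw [hkf]; exact Finset.sum_nonneg fun i _ => Int.fract_nonneg _
    exact_mod_cast this
  have hk1 : k ≤ m + 1 := by
    have : (k : ℝ) ≤ m + 1 := by
      rw [hkf]
      calc ∑ i, Int.fract (x i) ≤ ∑ i : Fin (m + 1), (1 : ℝ) :=
            Finset.sum_le_sum fun i _ => (Int.fract_lt_one _).le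
        _ = m + 1 := by simp
    exact_mod_cast this
  have hne : (Finset.powersetCard k.toNat (Finset.univ : Finset (Fin (m + 1)))).Nonempty := by
    apply Finset.powersetCard_nonempty.2
    simp; omega
  obtain ⟨U, hU, hmax⟩ := Finset.exists_max_image _ (fun U => ∑ i ∈ U, Int.fract (x i)) hne
  have hcard : U.card = k.toNat := (Finset.mem_powersetCard.1 hU).2
  have hex : ∀ i ∈ U, ∀ j ∉ U, Int.fract (x j) ≤ Int.fract (x i) := by
    intro i hi j hj
    have hj' : j ∉ U.erase i := fun h => hj (Finset.mem_of_mem_erase h)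
    have := hmax (insert j (U.erase i)) (by
      rw [Finset.mem_powersetCard]
      refine ⟨Finset.subset_univ _, ?_⟩
      rw [Finset.card_insert_of_notMem hj', Finset.card_erase_of_mem hi]
      have := Finset.card_pos.2 ⟨i, hi⟩
      omega)
    rw [Finset.sum_insert hj'] at this
    have h2 := Finset.add_sum_erase U (fun i => Int.fract (x i)) hi
    linarith
  refine ⟨fun i => ⌊x i⌋ + if i ∈ U then 1 else 0, ?_, ?_⟩
  · rw [Finset.sum_add_distrib]
    simp [hcard]
    omega
  · intro i j
    have a1 := Int.fract_nonneg (x i)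
    have a2 := Int.fract_lt_one (x i)
    have a3 := Int.fract_nonneg (x j)
    have a4 := Int.fract_lt_one (x j)
    have b1 := Int.floor_add_fract (x i)
    have b2 := Int.floor_add_fract (x j)
    by_cases hi : i ∈ U <;> by_cases hj : j ∈ U <;> simp only [hi, hj, if_true, if_false] <;> push_cast
    · linarith
    · linarith
    · have := hex j hj i hi
      linarith
    · linarith

theorem vol_box (n : ℕ) (R : ℝ) (hR : 0 ≤ R) : volume (box n R) = ENNReal.ofReal ((2 * R) ^ n) := by
  have : box n R = Metric.closedBall 0 R := by
    ext x
    simp [box, mem_closedBall_zero_iff, pi_norm_le_iff_of_nonneg hR]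
  rw [this, Real.volume_pi_closedBall _ hR]
  simp

theorem box_meas (n : ℕ) (R : ℝ) : MeasurableSet (box n R) := by
  have : box n R = ⋂ i, {x | |x i| ≤ R} := by ext; simp [box]
  rw [this]
  exact MeasurableSet.iInter fun i => measurableSet_le (by fun_prop) measurable_const

theorem box_add (n : ℕ) (R c : ℝ) (x y : Fin n → ℝ) (hx : x ∈ box n R) (hy : ‖y‖ ≤ c) :
    x + y ∈ box n (R + c) := by
  intro i
  have h1 := hx i
  have h2 : |y i| ≤ ‖y‖ := norm_le_pi_norm y i
  have := abs_add_le (x i) (y i)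
  simp only [Pi.add_apply]
  linarith

theorem ratio_bdd (n : ℕ) (A : Set (Fin n → ℝ)) (R : ℝ) :
    (volume (A ∩ box n R)).toReal / (volume (box n R)).toReal ≤ 1 := by
  by_cases hR : 0 ≤ R
  · apply div_le_one_of_le₀ _ ENNReal.toReal_nonneg
    apply ENNReal.toReal_mono
    · rw [vol_box n R hR]; exact ENNReal.ofReal_ne_top
    · exact measure_mono inter_subset_right
  · rcases Nat.eq_zero_or_pos n with h | h
    · subst h
      apply div_le_one_of_le₀ _ ENNReal.toReal_nonneg
      apply ENNReal.toReal_mono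
      · exact (measure_lt_top_of_subset (subset_univ _) (by simp)).ne
      · exact measure_mono inter_subset_right
    · have : box n R = ∅ := by
        ext x
        simp only [box, mem_setOf_eq, mem_empty_iff_false, iff_false]
        intro hx
        have := hx ⟨0, h⟩
        have := abs_nonneg (x ⟨0, h⟩)
        linarith
      simp [this]

theorem tendsto_aux (n : ℕ) (c : ℝ) :
    Tendsto (fun R : ℝ => (1 / 2 ^ n : ℝ) * ((R + c) / R) ^ n) atTop (nhds (1 / 2 ^ n)) := by
  have h1 : Tendsto (fun R : ℝ => 1 + c / R) atTop (nhds (1 + 0)) :=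
    tendsto_const_nhds.add (tendsto_const_nhds.div_atTop tendsto_id)
  have h2 : Tendsto (fun R : ℝ => (R + c) / R) atTop (nhds 1) := by
    rw [add_zero] at h1
    refine h1.congr' ?_
    filter_upwards [eventually_gt_atTop 0] with R hR
    field_simp
  simpa using (h2.pow n).const_mul (1 / 2 ^ n : ℝ)

theorem density_le (n : ℕ) (A : Set (Fin n → ℝ)) (c : ℝ) (hc : 0 ≤ c)
    (h : ∀ R : ℝ, 0 < R → 2 ^ n * volume (A ∩ box n R) ≤ volume (box n (R + c))) :
    density n A ≤ 1 / 2 ^ n := by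
  rw [← (tendsto_aux n c).limsup_eq]
  apply limsup_le_limsup
  · filter_upwards [eventually_gt_atTop 0] with R hR
    have h1 := ENNReal.toReal_mono (by rw [vol_box n _ (by linarith)]; exact ENNReal.ofReal_ne_top) (h R hR)
    rw [vol_box n _ (by linarith), ENNReal.toReal_mul, ENNReal.toReal_ofReal (by positivity)] at h1
    rw [vol_box n R hR.le, ENNReal.toReal_ofReal (by positivity)]
    simp at h1
    rw [div_le_iff₀ (by positivity)]
    have : (1 / 2 ^ n : ℝ) * ((R + c) / R) ^ n * (2 * R) ^ n = (2 * (R + c)) ^ n / 2 ^ n := by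
      simp only [mul_pow, div_pow]; field_simp
    rw [this, le_div_iff₀ (by positivity)]
    linarith
  · exact isCoboundedUnder_le_of_le (x := 0) atTop (fun R => by positivity)
  · exact (tendsto_aux n c).isBoundedUnder_le

theorem le_density (n : ℕ) (A : Set (Fin n → ℝ)) (c : ℝ) (hc : 0 ≤ c)
    (h : ∀ R : ℝ, 0 < R → volume (box n R) ≤ 2 ^ n * volume (A ∩ box n (R + c))) :
    1 / 2 ^ n ≤ density n A := by
  rw [← (tendsto_aux n (-c)).limsup_eq]
  apply limsup_le_limsup
  · filter_upwards [eventually_gt_atTop c] with R hR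
    have hR0 : 0 < R := by linarith
    have h0 := h (R - c) (by linarith)
    rw [sub_add_cancel] at h0
    have hfin : volume (A ∩ box n R) ≠ ⊤ := by
      apply ne_top_of_le_ne_top _ (measure_mono inter_subset_right)
      rw [vol_box n _ hR0.le]; exact ENNReal.ofReal_ne_top
    have h1 := ENNReal.toReal_mono (ENNReal.mul_ne_top (by simp) hfin) h0
    rw [vol_box n _ (by linarith), ENNReal.toReal_mul,
      ENNReal.toReal_ofReal (pow_nonneg (by linarith) _)] at h1
    simp at h1
    rw [vol_box n R hR0.le, ENNReal.toReal_ofReal (by positivity)]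
    rw [le_div_iff₀ (by positivity)]
    have : (1 / 2 ^ n : ℝ) * ((R + -c) / R) ^ n * (2 * R) ^ n = (2 * (R - c)) ^ n / 2 ^ n := by
      rw [← sub_eq_add_neg]
      simp only [mul_pow, div_pow]; field_simp
    rw [this, div_le_iff₀ (by positivity)]
    linarith
  · exact (tendsto_aux n (-c)).isCoboundedUnder_le
  · exact isBoundedUnder_of ⟨1, fun R => ratio_bdd n A R⟩

theorem e_inj (n : ℕ) (e : (Fin n → ℝ) →ₗ[ℝ] (Fin (n + 1) → ℝ))
    (hiso : ∀ x y : Fin n → ℝ, ∑ i, e x i * e y i = ∑ i, x i * y i) : Function.Injective e := by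
  rw [injective_iff_map_eq_zero]
  intro a ha
  have := hiso a a
  rw [ha] at this
  simp at this
  have h2 := (Finset.sum_eq_zero_iff_of_nonneg (fun i _ => mul_self_nonneg (a i))).1 this.symm
  ext i
  simpa using h2 i (Finset.mem_univ i)

theorem upper (n : ℕ) (e : (Fin n → ℝ) →ₗ[ℝ] (Fin (n + 1) → ℝ))
    (hrange : Set.range e = Hset n) (hinj : Function.Injective e)
    (A : Set (Fin n → ℝ)) (hA : MeasurableSet A)
    (hav : AvoidsOne n (fun x => (⨆ i, e x i) - (⨅ i, e x i)) A) :
    density n A ≤ 1 / 2 ^ n := by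
  classical
  have hex : ∀ U : Finset (Fin (n + 1)), ∃ x, e x =
      fun i => (if i ∈ U then 1 / 2 else 0) - (U.card : ℝ) / (2 * (n + 1)) := by
    intro U
    have : (fun i => (if i ∈ U then 1 / 2 else 0) - (U.card : ℝ) / (2 * (n + 1))) ∈ Set.range e := by
      rw [hrange]
      simp [Hset, Finset.sum_sub_distrib]
      field_simp
      ring
    exact this
  choose w hw using hex
  have hw' : ∀ U i, e (w U) i = (if i ∈ U then 1 / 2 else 0) - (U.card : ℝ) / (2 * (n + 1)) :=
    fun U i => by rw [hw]
  have hfull : w Finset.univ = 0 := by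
    apply hinj
    rw [hw, map_zero]
    ext i
    simp
    field_simp
    ring
  have hdiff : ∀ U V, U ⊆ V → w V = w U + w (V \ U) := by
    intro U V h
    apply hinj
    rw [map_add]
    ext i
    rw [Pi.add_apply, hw', hw', hw', Finset.cast_card_sdiff h]
    have hi : i ∈ U → i ∈ V := fun hh => h hh
    by_cases h1 : i ∈ U
    · simp [h1, hi h1]; ring
    · by_cases h2 : i ∈ V <;> simp [h1, h2] <;> ring
  have hcomp : ∀ a ∈ A, ∀ a' ∈ A, ∀ U U', a + w U = a' + w U' → U ⊆ U' ∨ U' ⊆ U := by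
    intro a ha a' ha' U U' heq
    by_contra hcon
    push Not at hcon
    obtain ⟨h1, h2⟩ := hcon
    obtain ⟨i, hi, hi'⟩ := Finset.not_subset.1 h1
    obtain ⟨j, hj, hj'⟩ := Finset.not_subset.1 h2
    apply hav a ha a' ha'
    have hd : a - a' = w U' - w U := by
      rw [sub_eq_sub_iff_add_eq_add, heq, add_comm]
    simp only [hd]
    apply osc_eq_one _ _ j i
    · simp only [map_sub, Pi.sub_apply, hw']
      simp [hi, hi', hj, hj']
      ring
    · intro k l
      simp only [map_sub, Pi.sub_apply, hw']
      split_ifs <;> linarith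
  let good : Fin (n + 1) → Set (Fin n → ℝ) := fun b =>
    {x | ∀ V : Finset (Fin (n + 1)), V.Nonempty → x + w V ∈ A → b ∈ V}
  have hgood : ∀ a ∈ A, ∃ b, a ∈ good b := by
    intro a ha
    let F : Finset (Finset (Fin (n + 1))) := Finset.univ.filter fun V => V.Nonempty ∧ a + w V ∈ A
    have hF : F.Nonempty := ⟨Finset.univ, by simp [F, hfull, ha]⟩
    obtain ⟨V, hV, hmin⟩ := Finset.exists_min_image F Finset.card hF
    simp only [F, Finset.mem_filter, Finset.mem_univ, true_and] at hV hmin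
    obtain ⟨b, hb⟩ := hV.1
    refine ⟨b, fun V' hV' hV'A => ?_⟩
    have hc := hmin V' ⟨hV', hV'A⟩
    rcases hcomp _ hV'A _ hV.2 V V' (by abel) with h | h
    · exact h hb
    · rw [Finset.eq_of_subset_of_card_le h hc]; exact hb
  have hgm : ∀ b, MeasurableSet (good b) := by
    intro b
    have : good b = ⋂ V : Finset (Fin (n + 1)), {x | V.Nonempty → x + w V ∈ A → b ∈ V} := by
      ext x; simp [good]
    rw [this]
    refine MeasurableSet.iInter fun V => ?_
    refine MeasurableSet.imp (MeasurableSet.const _) (MeasurableSet.imp ?_ (MeasurableSet.const _))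
    exact (measurable_id.add_const (w V)) hA
  let B : Fin (n + 1) → Set (Fin n → ℝ) := fun b => A ∩ disjointed good b
  have hBm : ∀ b, MeasurableSet (B b) := fun b => hA.inter
    (disjointedRec (p := MeasurableSet) (fun _ i ht => ht.diff (hgm i)) (hgm b))
  have hBd : Pairwise (Function.onFun Disjoint B) := fun b b' h =>
    (disjoint_disjointed good h).mono inter_subset_right inter_subset_right
  have hBU : A = ⋃ b, B b := by
    rw [← inter_iUnion, iUnion_disjointed]
    refine (inter_eq_left.2 ?_).symm
    intro a ha
    exact mem_iUnion.2 (hgood a ha)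
  have hBg : ∀ b, ∀ a ∈ B b, a ∈ A ∧ a ∈ good b := fun b a h => ⟨h.1, disjointed_subset _ _ h.2⟩
  let c : ℝ := ∑ U, ‖w U‖
  have hc : ∀ U, ‖w U‖ ≤ c := fun U =>
    Finset.single_le_sum (f := fun U => ‖w U‖) (fun i _ => norm_nonneg _) (Finset.mem_univ U)
  have hsub : ∀ a b U a' b' U', a ∈ B b → a' ∈ B b' → b ∉ U → b' ∉ U' → a + w U = a' + w U' →
      U ⊆ U' → U = U' := by
    intro a b U a' b' U' ha ha' hb hb' heq hs
    by_contra hne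
    have hn : (U' \ U).Nonempty := by
      rw [Finset.sdiff_nonempty]
      exact fun h => hne (hs.antisymm h)
    have h1 : a = a' + w (U' \ U) := by
      rw [hdiff U U' hs] at heq
      have : a + w U = (a' + w (U' \ U)) + w U := by rw [heq]; abel
      exact add_right_cancel this
    have := (hBg b' a' ha').2 _ hn (h1 ▸ (hBg b a ha).1)
    exact hb' (Finset.mem_sdiff.1 this).1
  apply density_le n A c (Finset.sum_nonneg fun i _ => norm_nonneg _)
  intro R hR
  let I : Finset (Σ _ : Fin (n + 1), Finset (Fin (n + 1))) :=
    Finset.univ.sigma fun b => (Finset.univ.erase b).powerset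
  let T : (Σ _ : Fin (n + 1), Finset (Fin (n + 1))) → Set (Fin n → ℝ) := fun p =>
    (fun x => x + -w p.2) ⁻¹' (B p.1 ∩ box n R)
  have hTm : ∀ p, MeasurableSet (T p) := fun p =>
    (measurable_id.add_const (-w p.2)) ((hBm p.1).inter (box_meas n R))
  have hTv : ∀ p, volume (T p) = volume (B p.1 ∩ box n R) := fun p =>
    measure_preimage_add_right _ _ _
  have hTd : (I : Set _).PairwiseDisjoint T := by
    rintro ⟨b, U⟩ hp ⟨b', U'⟩ hp' hne
    rw [Function.onFun, Set.disjoint_left]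
    intro x hx hx'
    apply hne
    have hbU : b ∉ U := by
      intro h
      simpa using (Finset.mem_powerset.1 (Finset.mem_sigma.1 hp).2) h
    have hbU' : b' ∉ U' := by
      intro h
      simpa using (Finset.mem_powerset.1 (Finset.mem_sigma.1 hp').2) h
    have heq : (x + -w U) + w U = (x + -w U') + w U' := by abel
    have h1 : x + -w U ∈ B b := hx.1
    have h2 : x + -w U' ∈ B b' := hx'.1
    have hU : U = U' := by
      rcases hcomp _ h1.1 _ h2.1 U U' heq with h | h
      · exact hsub _ _ _ _ _ _ h1 h2 hbU hbU' heq h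
      · exact (hsub _ _ _ _ _ _ h2 h1 hbU' hbU heq.symm h).symm
    subst hU
    have hb : b = b' := by
      by_contra hb
      exact Set.disjoint_left.1 (hBd hb) h1 h2
    subst hb
    rfl
  have hTs : (⋃ p ∈ I, T p) ⊆ box n (R + c) := by
    intro x hx
    simp only [mem_iUnion] at hx
    obtain ⟨p, _, hp⟩ := hx
    have := box_add n R c _ (w p.2) hp.2 (hc _)
    simpa using this
  calc 2 ^ n * volume (A ∩ box n R) = 2 ^ n * ∑ b, volume (B b ∩ box n R) := by
        congr 1
        conv_lhs => rw [hBU, iUnion_inter]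
        rw [measure_iUnion _ (fun b => (hBm b).inter (box_meas n R)), tsum_fintype]
        exact fun b b' h => (hBd h).mono inter_subset_left inter_subset_left
    _ = ∑ p ∈ I, volume (T p) := by
        simp only [hTv, I]
        rw [Finset.sum_sigma, Finset.mul_sum]
        apply Finset.sum_congr rfl
        intro b _
        simp [Finset.card_powerset, Finset.card_erase_of_mem]
    _ = volume (⋃ p ∈ I, T p) := (measure_biUnion_finset hTd fun p _ => hTm p).symm
    _ ≤ volume (box n (R + c)) := measure_mono hTs

theorem hyper_null (n : ℕ) (L : (Fin n → ℝ) →ₗ[ℝ] ℝ) (hL : L ≠ 0) (r : ℝ) :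
    volume {x | L x = r} = 0 := by
  by_cases h : ∃ x0, L x0 = r
  · obtain ⟨x0, hx0⟩ := h
    have : {x | L x = r} = (fun x => x + -x0) ⁻¹' (LinearMap.ker L : Set (Fin n → ℝ)) := by
      ext x
      simp [hx0, ← sub_eq_add_neg, sub_eq_zero]
    rw [this, measure_preimage_add_right]
    apply Measure.addHaar_submodule
    intro h
    exact hL (LinearMap.ker_eq_top.1 h)
  · have : {x | L x = r} = ∅ := by
      ext x
      simp only [mem_setOf_eq, mem_empty_iff_false, iff_false]
      exact fun hx => h ⟨x, hx⟩
    simp [this]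

theorem lower (n : ℕ) (e : (Fin n → ℝ) →ₗ[ℝ] (Fin (n + 1) → ℝ))
    (hrange : Set.range e = Hset n) :
    ∃ A : Set (Fin n → ℝ), MeasurableSet A ∧
      AvoidsOne n (fun x => (⨆ i, e x i) - (⨅ i, e x i)) A ∧ 1 / 2 ^ n ≤ density n A := by
  classical
  have hcont : Continuous e := LinearMap.continuous_of_finiteDimensional e
  have hc' : ∀ i, Continuous fun x => e x i := fun i => (continuous_apply i).comp hcont
  let A : Set (Fin n → ℝ) := {x | ∃ l : Fin (n + 1) → ℤ, ∑ i, l i = 0 ∧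
    ∀ i j, (e x i - l i) - (e x j - l j) < 1 / 2}
  let A' : Set (Fin n → ℝ) := {x | ∃ l : Fin (n + 1) → ℤ, ∑ i, l i = 0 ∧
    ∀ i j, (e x i - l i) - (e x j - l j) ≤ 1 / 2}
  have hAm : MeasurableSet A := by
    have : A = ⋃ l : Fin (n + 1) → ℤ, {x | ∑ i, l i = 0} ∩
        ⋂ i, ⋂ j, {x | (e x i - l i) - (e x j - l j) < 1 / 2} := by
      ext x; simp [A]
    rw [this]
    refine MeasurableSet.iUnion fun l => (MeasurableSet.const _).inter ?_
    refine MeasurableSet.iInter fun i => MeasurableSet.iInter fun j => ?_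
    apply IsOpen.measurableSet
    have := hc' i
    have := hc' j
    exact isOpen_lt (by fun_prop) continuous_const
  refine ⟨A, hAm, ?_, ?_⟩
  · rintro x ⟨l, hl, hx⟩ y ⟨m, hm, hy⟩ heq
    simp only [map_sub, Pi.sub_apply] at heq
    by_cases hlm : l = m
    · subst hlm
      have := osc_lt (fun i => e x i - e y i) 1 (fun i j => by
        have h1 := hx i j
        have h2 := hy j i
        linarith)
      linarith
    · have hs : ∑ i, (l i - m i) = 0 := by rw [Finset.sum_sub_distrib, hl, hm, sub_zero]
      have hs' : ∑ i, (m i - l i) = 0 := by rw [Finset.sum_sub_distrib, hl, hm, sub_zero]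
      obtain ⟨k, hk⟩ := Function.ne_iff.1 hlm
      obtain ⟨i, _, hi⟩ := Finset.exists_pos_of_sum_zero_of_exists_nonzero _ hs
        ⟨k, Finset.mem_univ k, sub_ne_zero.2 hk⟩
      obtain ⟨j, _, hj⟩ := Finset.exists_pos_of_sum_zero_of_exists_nonzero _ hs'
        ⟨k, Finset.mem_univ k, sub_ne_zero.2 (Ne.symm hk)⟩
      have hi' : (1 : ℝ) ≤ l i - m i := by exact_mod_cast hi
      have hj' : (1 : ℝ) ≤ m j - l j := by exact_mod_cast hj
      have h0 := le_osc (fun i => e x i - e y i) i j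
      have h1 := hx j i
      have h2 := hy i j
      linarith
  · have hnull : volume (A' \ A) = 0 := by
      have hsub : A' \ A ⊆ ⋃ l : Fin (n + 1) → ℤ, ⋃ i, ⋃ j, ⋃ _ : i ≠ j,
          {x | e x i - e x j = 1 / 2 + l i - l j} := by
        rintro x ⟨⟨l, hl, hx⟩, hn⟩
        have : ∃ i j, 1 / 2 ≤ (e x i - l i) - (e x j - l j) := by
          by_contra hcon
          push Not at hcon
          exact hn ⟨l, hl, hcon⟩
        obtain ⟨i, j, hij⟩ := this
        simp only [mem_iUnion]
        refine ⟨l, i, j, ?_, ?_⟩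
        · rintro rfl
          norm_num at hij
        · have := hx i j
          simp only [mem_setOf_eq]
          linarith
      refine measure_mono_null hsub ?_
      refine measure_iUnion_null fun l => measure_iUnion_null fun i => measure_iUnion_null fun j =>
        measure_iUnion_null fun hij => ?_
      let pr : Fin (n + 1) → ((Fin (n + 1) → ℝ) →ₗ[ℝ] ℝ) := fun k => LinearMap.proj k
      let L : (Fin n → ℝ) →ₗ[ℝ] ℝ := (pr i - pr j) ∘ₗ e
      have hL : L ≠ 0 := by
        have : (Pi.single i 1 - Pi.single j 1 : Fin (n + 1) → ℝ) ∈ Set.range e := by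
          rw [hrange]
          simp [Hset, Finset.sum_sub_distrib]
        obtain ⟨x, hx⟩ := this
        intro h
        have : L x = 2 := by
          simp [L, pr, hx, hij, hij.symm]
          norm_num
        rw [h] at this
        simp at this
      exact hyper_null n L hL _
    have hex : ∀ U : Finset (Fin n), ∃ x, e x =
        (Fin.cons (-(U.card : ℝ) / 2) (fun i => if i ∈ U then 1 / 2 else 0) : Fin (n + 1) → ℝ) := by
      intro U
      have : (Fin.cons (-(U.card : ℝ) / 2) (fun i => if i ∈ U then 1 / 2 else 0) :
          Fin (n + 1) → ℝ) ∈ Set.range e := by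
        rw [hrange]
        simp [Hset, Fin.sum_univ_succ]
        ring
      exact this
    choose t ht using hex
    have hcov : ∀ x, ∃ U, x + -t U ∈ A' := by
      intro x
      have hx : ∑ i, e x i = 0 := by
        have : e x ∈ Hset n := hrange ▸ mem_range_self x
        exact this
      obtain ⟨l, hl, hlx⟩ := cover_An (fun i => 2 * e x i) (by rw [← Finset.mul_sum, hx, mul_zero])
      let U : Finset (Fin n) := Finset.univ.filter fun i => l i.succ % 2 = 1
      refine ⟨U, ?_⟩
      let m : Fin n → ℤ := fun i => l i.succ / 2
      let mm : Fin (n + 1) → ℤ := Fin.cons (-∑ i, m i) m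
      have hm : ∀ i, l i.succ = 2 * m i + if i ∈ U then 1 else 0 := by
        intro i
        simp only [U, m, Finset.mem_filter, Finset.mem_univ, true_and]
        split_ifs <;> omega
      have hsum : ∑ i : Fin n, l i.succ = 2 * ∑ i, m i + U.card := by
        rw [Finset.sum_congr rfl fun i _ => hm i, Finset.sum_add_distrib, Finset.mul_sum]
        simp
      have hkey : ∀ i, e (t U) i = (l i : ℝ) / 2 - mm i := by
        intro i
        rw [ht]
        refine Fin.cases ?_ (fun i => ?_) i
        · have h0 : l 0 = -(2 * ∑ i, m i + U.card) := by
            rw [Fin.sum_univ_succ, hsum] at hl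
            linarith
          simp only [Fin.cons_zero, mm, h0]
          push_cast
          ring
        · simp only [Fin.cons_succ, mm, hm i]
          split_ifs <;> push_cast <;> ring
      refine ⟨mm, ?_, ?_⟩
      · simp [mm, Fin.sum_univ_succ]
      · intro i j
        have := hlx i j
        simp only [map_add, map_neg, Pi.add_apply, Pi.neg_apply, hkey]
        linarith
    let c : ℝ := ∑ U, ‖t U‖
    have hc : ∀ U, ‖t U‖ ≤ c := fun U =>
      Finset.single_le_sum (f := fun U => ‖t U‖) (fun i _ => norm_nonneg _) (Finset.mem_univ U)
    apply le_density n A c (Finset.sum_nonneg fun i _ => norm_nonneg _)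
    intro R hR
    have hle : volume (A' ∩ box n (R + c)) ≤ volume (A ∩ box n (R + c)) := by
      calc volume (A' ∩ box n (R + c)) ≤ volume ((A ∩ box n (R + c)) ∪ (A' \ A)) := by
            apply measure_mono
            rintro x ⟨h1, h2⟩
            by_cases h : x ∈ A
            · exact Or.inl ⟨h, h2⟩
            · exact Or.inr ⟨h1, h⟩
        _ ≤ volume (A ∩ box n (R + c)) + volume (A' \ A) := measure_union_le _ _
        _ = _ := by rw [hnull, add_zero]
    calc volume (box n R) ≤ volume (⋃ U, (fun x => x + -t U) ⁻¹' (A' ∩ box n (R + c))) := by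
          apply measure_mono
          intro x hx
          obtain ⟨U, hU⟩ := hcov x
          exact mem_iUnion.2 ⟨U, hU, box_add n R c x _ hx (by rw [norm_neg]; exact hc U)⟩
      _ ≤ ∑ U, volume ((fun x => x + -t U) ⁻¹' (A' ∩ box n (R + c))) := measure_iUnion_fintype_le _ _
      _ = 2 ^ n * volume (A' ∩ box n (R + c)) := by
          simp only [measure_preimage_add_right]
          simp
      _ ≤ _ := by gcongr

/-- `m₁` for the Voronoï region of `Aₙ`: computed on `ℝⁿ` transported through any
linear isometric identification `e` of `ℝⁿ` with the hyperplane `H`; the norm of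
`x` is `max_j (e x)_j - min_i (e x)_i`, which is the norm whose unit ball is the
Voronoï region of `Aₙ`. -/
theorem m1_voronoi_An (n : ℕ) (hn : 2 ≤ n)
    (e : (Fin n → ℝ) →ₗ[ℝ] (Fin (n + 1) → ℝ))
    (hrange : Set.range e = Hset n)
    (hiso : ∀ x y : Fin n → ℝ, ∑ i, e x i * e y i = ∑ i, x i * y i) :
    m1 n (fun x => (⨆ i, e x i) - (⨅ i, e x i)) = 1 / 2 ^ n := by
  have hinj := e_inj n e hiso
  have hub : ∀ d ∈ {d : ℝ | ∃ A : Set (Fin n → ℝ), MeasurableSet A ∧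
      AvoidsOne n (fun x => (⨆ i, e x i) - (⨅ i, e x i)) A ∧ d = density n A}, d ≤ 1 / 2 ^ n := by
    rintro d ⟨A, hA, hav, rfl⟩
    exact upper n e hrange hinj A hA hav
  obtain ⟨A, hA, hav, hd⟩ := lower n e hrange
  apply le_antisymm
  · exact csSup_le ⟨_, A, hA, hav, rfl⟩ hub
  · exact hd.trans (le_csSup ⟨_, hub⟩ ⟨A, hA, hav, rfl⟩)
end

section
/- For n ≥ 4 and the norm ‖x‖_P = max_{i≠j}(|x_i|+|x_j|) on ℝⁿ (unit ball the Voronoï region of D_n), m₁(ℝⁿ, ‖·‖_P) ≤ 1/((3/4)·2ⁿ + n − 1). -/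
open MeasureTheory Filter Set Pointwise

/-- The norm `‖x‖ = max_{i ≠ j} (|xᵢ| + |xⱼ|)`, whose unit ball is the Voronoï
region of the lattice `Dₙ`. -/
noncomputable def DnNorm (n : ℕ) (x : Fin n → ℝ) : ℝ :=
  sSup {r : ℝ | ∃ i j, i ≠ j ∧ r = |x i| + |x j|}

namespace DnProof

def IsQ {n : ℕ} (d : Fin n → ℤ) : Prop := ∀ i, d i = 1 ∨ d i = -1

def IsX {n : ℕ} (d : Fin n → ℤ) : Prop :=
  ∃ i, (d i = 0 ∨ d i = 2 ∨ d i = -2) ∧ ∀ j, j ≠ i → d j = 0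

def IsS {n : ℕ} (d : Fin n → ℤ) : Prop := IsQ d ∨ IsX d

lemma IsQ.neg {n : ℕ} {d : Fin n → ℤ} (h : IsQ d) : IsQ (-d) := by
  intro i; have := h i; simp only [Pi.neg_apply]; omega

lemma IsX.neg {n : ℕ} {d : Fin n → ℤ} (h : IsX d) : IsX (-d) := by
  obtain ⟨i, h1, h2⟩ := h
  refine ⟨i, ?_, fun j hj => ?_⟩
  · simp only [Pi.neg_apply]; omega
  · simp [h2 j hj]

lemma IsS.neg {n : ℕ} {d : Fin n → ℤ} (h : IsS d) : IsS (-d) :=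
  h.imp IsQ.neg IsX.neg

lemma IsS.swap {n : ℕ} {d e : Fin n → ℤ} (h : IsS (d - e)) : IsS (e - d) := by
  simpa using h.neg

lemma isX_zero {n : ℕ} (hn : 4 ≤ n) : IsX (0 : Fin n → ℤ) :=
  ⟨⟨0, by omega⟩, by simp, by simp⟩

/-- integer version of norm one (after scaling by four) -/
def IsFour {n : ℕ} (d : Fin n → ℤ) : Prop :=
  (∀ i j, i ≠ j → |d i| + |d j| ≤ 4) ∧ ∃ i j, i ≠ j ∧ |d i| + |d j| = 4

lemma exists_other {n : ℕ} (hn : 4 ≤ n) (i : Fin n) : ∃ j, j ≠ i := by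
  by_cases h : i = ⟨0, by omega⟩
  · exact ⟨⟨1, by omega⟩, by rw [h]; simp⟩
  · exact ⟨_, fun h' => h h'.symm⟩

lemma even_case {n : ℕ} (hn : 4 ≤ n) (d : Fin n → ℤ) (h : ∀ i, d i = 0 ∨ d i = 2 ∨ d i = -2) :
    IsX d ∨ IsFour d := by
  by_cases h2 : ∃ i j, i ≠ j ∧ d i ≠ 0 ∧ d j ≠ 0
  · right
    obtain ⟨i, j, hij, hi, hj⟩ := h2
    refine ⟨fun a b _ => ?_, i, j, hij, ?_⟩
    · rcases h a with h0 | h0 | h0 <;> rcases h b with h' | h' | h' <;> simp [h0, h']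
    · rcases h i with h1 | h1 | h1 <;> rcases h j with h' | h' | h' <;> simp_all
  · left
    push Not at h2
    by_cases h3 : ∃ i, d i ≠ 0
    · obtain ⟨i, hi⟩ := h3
      exact ⟨i, h i, fun j hj => h2 i j hj.symm hi⟩
    · push Not at h3
      have : d = 0 := funext h3
      rw [this]; exact isX_zero hn

lemma qx_case {n : ℕ} (hn : 4 ≤ n) (q x : Fin n → ℤ) (hq : IsQ q) (hx : IsX x) :
    IsQ (q - x) ∨ IsFour (q - x) := by
  obtain ⟨i, h1, h2⟩ := hx
  have hj : ∀ j, j ≠ i → |(q - x) j| = 1 := by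
    intro j hj
    have := hq j
    simp only [Pi.sub_apply, h2 j hj]
    rcases this with h | h <;> simp [h]
  by_cases h3 : (q - x) i = 1 ∨ (q - x) i = -1
  · left
    intro j
    by_cases hji : j = i
    · rw [hji]; exact h3
    · have := hj j hji
      rcases abs_eq (by norm_num : (0:ℤ) ≤ 1) |>.1 this with h | h <;> simp [h]
  · right
    have hi : |(q - x) i| = 3 := by
      have := hq i
      have h4 : (q - x) i = 3 ∨ (q - x) i = -3 := by
        simp only [Pi.sub_apply] at *
        omega
      rcases h4 with h | h <;> simp [h]
    refine ⟨fun a b hab => ?_, ?_⟩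
    · by_cases ha : a = i
      · have := hj b (by rintro rfl; exact hab ha)
        rw [this, ha, hi]; norm_num
      · by_cases hb : b = i
        · rw [hj a ha, hb, hi]; norm_num
        · rw [hj a ha, hj b hb]; norm_num
    · obtain ⟨j, hji⟩ := exists_other hn i
      exact ⟨i, j, hji.symm, by rw [hi, hj j hji]; norm_num⟩

lemma IsFour.neg {n : ℕ} {d : Fin n → ℤ} (h : IsFour d) : IsFour (-d) := by
  simpa [IsFour] using h

/-- common neighbours: adjacent, equal or at norm distance one -/
lemma key {n : ℕ} (hn : 4 ≤ n) (u v : Fin n → ℤ) (hu : IsS u) (hv : IsS v) :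
    IsS (u - v) ∨ IsFour (u - v) := by
  rcases hu with hu | hu <;> rcases hv with hv | hv
  · refine (even_case hn _ fun i => ?_).imp_left Or.inr
    have := hu i; have := hv i; simp only [Pi.sub_apply]; omega
  · exact (qx_case hn u v hu hv).imp_left Or.inl
  · have := qx_case hn v u hv hu
    rw [← neg_sub]
    exact this.imp (fun h => Or.inl h.neg) (fun h => h.neg)
  · obtain ⟨i, h1, h2⟩ := hu
    obtain ⟨j, h3, h4⟩ := hv
    by_cases hij : i = j
    · subst hij
      by_cases h5 : (u - v) i = 4 ∨ (u - v) i = -4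
      · right
        have hi : |(u - v) i| = 4 := by rcases h5 with h | h <;> simp [h]
        have hz : ∀ k, k ≠ i → |(u - v) k| = 0 := fun k hk => by simp [h2 k hk, h4 k hk]
        refine ⟨fun a b hab => ?_, ?_⟩
        · by_cases ha : a = i
          · have := hz b (by rintro rfl; exact hab ha)
            rw [this, ha, hi]; norm_num
          · by_cases hb : b = i
            · rw [hz a ha, hb, hi]; norm_num
            · rw [hz a ha, hz b hb]; norm_num
        · obtain ⟨j, hji⟩ := exists_other hn i
          exact ⟨i, j, hji.symm, by rw [hi, hz j hji]; norm_num⟩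
      · left; right
        refine ⟨i, ?_, fun k hk => by simp [h2 k hk, h4 k hk]⟩
        simp only [Pi.sub_apply] at *
        omega
    · refine (even_case hn _ fun k => ?_).imp_left Or.inr
      simp only [Pi.sub_apply]
      by_cases hk : k = i
      · have := h4 k (by rw [hk]; exact hij)
        subst hk; omega
      · have := h2 k hk
        by_cases hk' : k = j
        · subst hk'; omega
        · have := h4 k hk'; omega

/-- embedding of the integer lattice -/
noncomputable def emb {n : ℕ} (z : Fin n → ℤ) : Fin n → ℝ := fun i => (z i : ℝ) / 4

lemma emb_sub {n : ℕ} (z w : Fin n → ℤ) : emb (z - w) = emb z - emb w := by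
  ext i; simp [emb, sub_div]

lemma emb_zero {n : ℕ} : emb (0 : Fin n → ℤ) = 0 := by
  ext i; simp [emb]

lemma emb_add {n : ℕ} (z w : Fin n → ℤ) : emb (z + w) = emb z + emb w := by
  ext i; simp [emb, add_div]

lemma emb_neg {n : ℕ} (z : Fin n → ℤ) : emb (-z) = -emb z := by
  ext i; simp [emb, neg_div]

lemma norm_emb {n : ℕ} (d : Fin n → ℤ) (h : IsFour d) : DnNorm n (emb d) = 1 := by
  have e : ∀ i j, |emb d i| + |emb d j| = ((|d i| + |d j| : ℤ) : ℝ) / 4 := by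
    intro i j; simp [emb, abs_div, add_div]
  refine IsGreatest.csSup_eq ⟨?_, ?_⟩
  · obtain ⟨i, j, hij, h4⟩ := h.2
    exact ⟨i, j, hij, by rw [e, h4]; norm_num⟩
  · rintro r ⟨i, j, hij, rfl⟩
    have h4 : ((|d i| + |d j| : ℤ) : ℝ) ≤ 4 := by exact_mod_cast h.1 i j hij
    rw [e]; linarith

/-- two points of `A` with a common neighbour are adjacent or equal -/
lemma adj {n : ℕ} (hn : 4 ≤ n) {A : Set (Fin n → ℝ)} (hA : AvoidsOne n (DnNorm n) A)
    (x : Fin n → ℝ) (c u v : Fin n → ℤ) (hu : x + emb u ∈ A) (hv : x + emb v ∈ A)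
    (h1 : IsS (u - c)) (h2 : IsS (v - c)) : IsS (u - v) := by
  have := key hn _ _ h1 h2
  rw [sub_sub_sub_cancel_right] at this
  refine this.resolve_right fun h => hA _ hu _ hv ?_
  rw [add_sub_add_left_eq_sub, ← emb_sub]
  exact norm_emb _ h

/-! ### Finite combinatorics -/
open scoped Classical in
noncomputable def Qf (n : ℕ) : Finset (Fin n → ℤ) := Fintype.piFinset fun _ => {1, -1}

open scoped Classical in
noncomputable def Sf (n : ℕ) : Finset (Fin n → ℤ) :=
  (Fintype.piFinset fun _ => Finset.Icc (-2) 2).filter IsS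

open scoped Classical in
noncomputable def Xf (n : ℕ) : Finset (Fin n → ℤ) :=
  (Fintype.piFinset fun _ => Finset.Icc (-2) 2).filter IsX

lemma mem_Qf {n : ℕ} {d : Fin n → ℤ} : d ∈ Qf n ↔ IsQ d := by
  simp [Qf, IsQ]

lemma bd_S {n : ℕ} {d : Fin n → ℤ} (h : IsS d) (i : Fin n) : -2 ≤ d i ∧ d i ≤ 2 := by
  rcases h with h | ⟨j, h1, h2⟩
  · have := h i; omega
  · by_cases hij : i = j
    · subst hij; omega
    · have := h2 i hij; omega

lemma mem_Sf {n : ℕ} {d : Fin n → ℤ} : d ∈ Sf n ↔ IsS d := by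
  simp only [Sf, Finset.mem_filter, Fintype.mem_piFinset, Finset.mem_Icc, and_iff_right_iff_imp]
  exact fun h i => bd_S h i

lemma mem_Xf {n : ℕ} {d : Fin n → ℤ} : d ∈ Xf n ↔ IsX d := by
  simp only [Xf, Finset.mem_filter, Fintype.mem_piFinset, Finset.mem_Icc, and_iff_right_iff_imp]
  exact fun h i => bd_S (Or.inr h) i

lemma struct {n : ℕ} (hn : 4 ≤ n) (O : Finset (Fin n → ℤ)) (hO : ∀ a ∈ O, ∀ b ∈ O, IsX (a - b))
    (hne : O.Nonempty) : ∃ o ∈ O, ∃ k, ∀ a ∈ O, a = o ∨ a = Function.update o k (o k + 2) := by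
  by_cases h : ∃ o ∈ O, ∃ a ∈ O, ∃ k, a k = o k + 2
  · obtain ⟨o, ho, a, ha, k, hk⟩ := h
    have hak : ∀ j, j ≠ k → a j = o j := by
      obtain ⟨i, h1, h2⟩ := hO a ha o ho
      have : k = i := by
        by_contra hc
        have := h2 k hc; simp at this; omega
      subst this
      intro j hj; have := h2 j hj; simp at this; omega
    refine ⟨o, ho, k, fun b hb => ?_⟩
    obtain ⟨i, h1, h2⟩ := hO b hb o ho
    obtain ⟨i', h1', h2'⟩ := hO b hb a ha
    simp only [Pi.sub_apply] at h1 h2 h1' h2'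
    by_cases hik : i = k
    · subst hik
      have hbo : b i = o i ∨ b i = o i + 2 := by
        by_cases hii : i = i'
        · subst hii; omega
        · have := h2' i hii; omega
      refine hbo.imp (fun h => ?_) (fun h => ?_)
      · ext j
        by_cases hj : j = i
        · rw [hj, h]
        · have := h2 j hj; omega
      · ext j
        by_cases hj : j = i
        · rw [hj, h]; simp
        · have := h2 j hj
          rw [Function.update_of_ne hj]; omega
    · left
      have hbk := h2 k (Ne.symm hik)
      have hki' : k = i' := by
        by_contra hc
        have := h2' k hc; omega
      ext j
      by_cases hj : j = i
      · subst hj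
        have := h2' j (by rw [← hki']; exact hik)
        have := hak j hik
        omega
      · have := h2 j hj; omega
  · obtain ⟨o, ho⟩ := hne
    refine ⟨o, ho, ⟨0, by omega⟩, fun a ha => Or.inl ?_⟩
    push Not at h
    obtain ⟨i, h1, h2⟩ := hO a ha o ho
    simp only [Pi.sub_apply] at h1 h2
    ext j
    by_cases hj : j = i
    · subst hj
      have := h o ho a ha j
      have := h a ha o ho j
      omega
    · have := h2 j hj; omega

open scoped Classical in
lemma card_Q {n : ℕ} (hn : 4 ≤ n) (E : Finset (Fin n → ℤ)) (hE : ∀ a ∈ E, ∀ b ∈ E, IsX (a - b)) :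
    3 * 2 ^ n * E.card ≤ 4 * (E + Qf n).card := by
  rcases E.eq_empty_or_nonempty with rfl | hne
  · simp
  obtain ⟨e, he, k, hk⟩ := struct hn E hE hne
  have hQ : (Qf n).card = 2 ^ n := by simp [Qf]
  by_cases h2 : Function.update e k (e k + 2) ∈ E
  · have hc : E.card ≤ 2 := by
      refine (Finset.card_le_card (t := {e, Function.update e k (e k + 2)}) ?_).trans
        Finset.card_le_two
      intro a ha; simpa using hk a ha
    have hsub : (Fintype.piFinset fun j => if j = k then ({e j - 1, e j + 1, e j + 3} : Finset ℤ)
        else {e j - 1, e j + 1}) ⊆ E + Qf n := by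
      intro x hx
      rw [Fintype.mem_piFinset] at hx
      rw [Finset.mem_add]
      have hxk := hx k
      simp only [if_true, Finset.mem_insert, Finset.mem_singleton] at hxk
      by_cases h3 : x k = e k + 3
      · refine ⟨_, h2, x - Function.update e k (e k + 2), ?_, by simp⟩
        rw [mem_Qf]
        intro j
        by_cases hj : j = k
        · subst hj; simp; omega
        · have := hx j
          simp [hj] at this
          simp [hj]; omega
      · refine ⟨_, he, x - e, ?_, by simp⟩
        rw [mem_Qf]
        intro j
        by_cases hj : j = k
        · subst hj; simp; omega
        · have := hx j
          simp [hj] at this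
          simp; omega
    have hcard := Finset.card_le_card hsub
    rw [Fintype.card_piFinset, ← Finset.mul_prod_erase _ _ (Finset.mem_univ k)] at hcard
    have h3 : (({e k - 1, e k + 1, e k + 3} : Finset ℤ)).card = 3 := by
      rw [Finset.card_eq_three]
      exact ⟨_, _, _, by omega, by omega, by omega, rfl⟩
    have h4 : ∀ j ∈ Finset.univ.erase k, (if j = k then ({e j - 1, e j + 1, e j + 3} : Finset ℤ)
        else {e j - 1, e j + 1}).card = 2 := by
      intro j hj
      rw [if_neg (Finset.ne_of_mem_erase hj), Finset.card_pair (by omega)]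
    rw [Finset.prod_congr rfl h4, if_pos rfl, h3] at hcard
    simp only [Finset.prod_const, Finset.card_erase_of_mem (Finset.mem_univ k), Finset.card_univ,
      Fintype.card_fin] at hcard
    have h5 : 2 ^ n = 2 * 2 ^ (n - 1) := by
      rw [← pow_succ']; congr 1; omega
    have : 3 * 2 ^ n * E.card ≤ 3 * 2 ^ n * 2 := Nat.mul_le_mul_left _ hc
    omega
  · have hc : E.card ≤ 1 := by
      rw [Finset.card_le_one]
      have : ∀ a ∈ E, a = e := fun a ha => (hk a ha).resolve_right (by rintro rfl; exact h2 ha)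
      intro a ha b hb; rw [this a ha, this b hb]
    have : (Qf n).card ≤ (E + Qf n).card := by
      apply Finset.card_le_card_add_left hne
    rw [hQ] at this
    have : 3 * 2 ^ n * E.card ≤ 3 * 2 ^ n * 1 := Nat.mul_le_mul_left _ hc
    omega

open scoped Classical in
lemma card_X {n : ℕ} (hn : 4 ≤ n) (E O : Finset (Fin n → ℤ)) (hE : ∀ a ∈ E, ∀ b ∈ E, IsX (a - b))
    (hO : ∀ a ∈ O, ∀ b ∈ O, IsX (a - b)) (hEO : ∀ a ∈ E, ∀ b ∈ O, IsQ (a - b)) :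
    E.card * (n - 1) ≤ ((E + Xf n) \ (O + Qf n)).card := by
  rcases E.eq_empty_or_nonempty with rfl | hne
  · simp
  have ex : ∃ (o : Fin n → ℤ) (k : Fin n), (∀ e ∈ E, IsQ (e - o)) ∧
      ∀ o' ∈ O, ∀ j, j ≠ k → o' j = o j := by
    rcases O.eq_empty_or_nonempty with rfl | hOne
    · obtain ⟨e, he, k, hk⟩ := struct hn E hE hne
      refine ⟨fun i => e i + 1, k, fun a ha i => ?_, by simp⟩
      rcases hk a ha with rfl | rfl
      · simp
      · by_cases hi : i = k
        · subst hi; simp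
        · simp [hi]
    · obtain ⟨o, ho, k, hk⟩ := struct hn O hO hOne
      refine ⟨o, k, fun e he => hEO e he o ho, fun o' ho' j hj => ?_⟩
      rcases hk o' ho' with rfl | rfl
      · rfl
      · simp [hj]
  obtain ⟨o, k, h1, h2⟩ := ex
  have hcard : (E ×ˢ (Finset.univ.erase k)).card = E.card * (n - 1) := by
    simp [Finset.card_product]
  rw [← hcard]
  refine Finset.card_le_card_of_injOn
    (fun p => Function.update p.1 p.2 (3 * p.1 p.2 - 2 * o p.2)) ?_ ?_
  · rintro ⟨e, j⟩ hp
    simp only [Finset.coe_product, Set.mem_prod, Finset.mem_coe, Finset.mem_erase,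
      Finset.mem_univ, and_true] at hp
    obtain ⟨he, hj⟩ := hp
    have hq := h1 e he j
    simp only [Pi.sub_apply] at hq
    simp only [Finset.coe_sdiff, Set.mem_sdiff, Finset.mem_coe]
    constructor
    · rw [Finset.mem_add]
      refine ⟨e, he, Function.update e j (3 * e j - 2 * o j) - e, ?_, by simp⟩
      rw [mem_Xf]
      refine ⟨j, ?_, fun i hi => by simp [hi]⟩
      simp; omega
    · rw [Finset.mem_add]
      rintro ⟨o', ho', q, hq', heq⟩
      have h3 := h2 o' ho' j hj
      have h4 := (mem_Qf.1 hq') j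
      have := congrFun heq j
      simp at this
      omega
  · rintro ⟨e, j⟩ hp ⟨e', j'⟩ hp' heq
    simp only [Finset.coe_product, Set.mem_prod, Finset.mem_coe, Finset.mem_erase,
      Finset.mem_univ, and_true] at hp hp' heq
    have hq := h1 e hp.1 j
    have hq' := h1 e' hp'.1 j
    simp only [Pi.sub_apply] at hq hq'
    have hjj : j = j' := by
      by_contra hc
      have := congrFun heq j
      simp [hc] at this
      omega
    subst hjj
    have : e = e' := by
      ext i
      have h3 := congrFun heq i
      by_cases hi : i = j
      · subst hi; simp at h3; omega
      · simpa [hi] using h3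
    rw [this]

open scoped Classical in
lemma card_clique {n : ℕ} (hn : 4 ≤ n) (C : Finset (Fin n → ℤ))
    (hC : ∀ a ∈ C, ∀ b ∈ C, IsS (a - b)) :
    C.card * (3 * 2 ^ n + 4 * (n - 1)) ≤ 4 * (C + Sf n).card := by
  set z : Fin n := ⟨0, by omega⟩
  set E := C.filter (fun c => Even (c z)) with hE
  set O := C.filter (fun c => ¬ Even (c z)) with hO
  have hcard : E.card + O.card = C.card := Finset.card_filter_add_card_filter_not _
  have xev : ∀ d : Fin n → ℤ, IsX d → Even (d z) := by
    rintro d ⟨i, h1, h2⟩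
    by_cases h : z = i
    · subst h; rcases h1 with h | h | h <;> rw [h] <;> decide
    · rw [h2 z h]; simp
  have qod : ∀ d : Fin n → ℤ, IsQ d → ¬ Even (d z) := by
    intro d h
    rcases h z with h | h <;> rw [h] <;> decide
  have hEE : ∀ a ∈ E, ∀ b ∈ E, IsX (a - b) := by
    intro a ha b hb
    rw [hE, Finset.mem_filter] at ha hb
    refine (hC a ha.1 b hb.1).resolve_left fun h => qod _ h ?_
    exact ha.2.sub hb.2
  have hOO : ∀ a ∈ O, ∀ b ∈ O, IsX (a - b) := by
    intro a ha b hb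
    rw [hO, Finset.mem_filter] at ha hb
    refine (hC a ha.1 b hb.1).resolve_left fun h => qod _ h ?_
    simp only [Pi.sub_apply, Int.even_sub]; tauto
  have hEO : ∀ a ∈ E, ∀ b ∈ O, IsQ (a - b) := by
    intro a ha b hb
    rw [hE, Finset.mem_filter] at ha
    rw [hO, Finset.mem_filter] at hb
    refine (hC a ha.1 b hb.1).resolve_right fun h => ?_
    have := xev _ h
    simp only [Pi.sub_apply, Int.even_sub] at this; tauto
  have hOE : ∀ a ∈ O, ∀ b ∈ E, IsQ (a - b) := fun a ha b hb => by
    simpa using (hEO b hb a ha).neg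
  have a1 := card_Q hn E hEE
  have a2 := card_Q hn O hOO
  have a3 := card_X hn E O hEE hOO hEO
  have a4 := card_X hn O E hOO hEE hOE
  have hd1 : Disjoint ((E + Xf n) \ (O + Qf n)) (O + Qf n) := Finset.sdiff_disjoint
  have hd2 : Disjoint ((O + Xf n) \ (E + Qf n)) (E + Qf n) := Finset.sdiff_disjoint
  have ev1 : ∀ x ∈ ((E + Xf n) \ (O + Qf n)) ∪ (O + Qf n), Even (x z) := by
    intro x hx
    rw [Finset.sdiff_union_self_eq_union, Finset.mem_union, Finset.mem_add, Finset.mem_add] at hx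
    rcases hx with ⟨a, ha, b, hb, rfl⟩ | ⟨a, ha, b, hb, rfl⟩
    · have := xev b (mem_Xf.1 hb)
      exact (Finset.mem_filter.1 ha).2.add this
    · have := qod b (mem_Qf.1 hb)
      have h' := (Finset.mem_filter.1 ha).2
      simp only [Pi.add_apply, Int.even_add]; tauto
  have ev2 : ∀ x ∈ ((O + Xf n) \ (E + Qf n)) ∪ (E + Qf n), ¬ Even (x z) := by
    intro x hx
    rw [Finset.sdiff_union_self_eq_union, Finset.mem_union, Finset.mem_add, Finset.mem_add] at hx
    rcases hx with ⟨a, ha, b, hb, rfl⟩ | ⟨a, ha, b, hb, rfl⟩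
    · have := xev b (mem_Xf.1 hb)
      have h' := (Finset.mem_filter.1 ha).2
      simp only [Pi.add_apply, Int.even_add]; tauto
    · have := qod b (mem_Qf.1 hb)
      have h' := (Finset.mem_filter.1 ha).2
      simp only [Pi.add_apply, Int.even_add]; tauto
  have hd : Disjoint (((E + Xf n) \ (O + Qf n)) ∪ (O + Qf n))
      (((O + Xf n) \ (E + Qf n)) ∪ (E + Qf n)) := by
    rw [Finset.disjoint_left]
    exact fun x hx hx' => ev2 x hx' (ev1 x hx)
  have hQS : Qf n ⊆ Sf n := fun x hx => mem_Sf.2 (Or.inl (mem_Qf.1 hx))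
  have hXS : Xf n ⊆ Sf n := fun x hx => mem_Sf.2 (Or.inr (mem_Xf.1 hx))
  have hEC : E ⊆ C := Finset.filter_subset _ _
  have hOC : O ⊆ C := Finset.filter_subset _ _
  have hsub : (((E + Xf n) \ (O + Qf n)) ∪ (O + Qf n)) ∪
      (((O + Xf n) \ (E + Qf n)) ∪ (E + Qf n)) ⊆ C + Sf n := by
    rw [Finset.sdiff_union_self_eq_union, Finset.sdiff_union_self_eq_union]
    refine Finset.union_subset (Finset.union_subset ?_ ?_) (Finset.union_subset ?_ ?_) <;>
      apply Finset.add_subset_add <;> assumption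
  have := Finset.card_le_card hsub
  rw [Finset.card_union_of_disjoint hd, Finset.card_union_of_disjoint hd1,
    Finset.card_union_of_disjoint hd2] at this
  rw [← hcard]
  nlinarith

/-! ### Mass transport -/
open scoped Classical in
noncomputable def Pf {n : ℕ} (A : Set (Fin n → ℝ)) (a : Fin n → ℝ) : Finset (Fin n → ℤ) :=
  (Sf n).filter (fun s => a + emb s ∈ A)

open scoped Classical in
noncomputable def gw {n : ℕ} (t : Fin n → ℤ) (P : Finset (Fin n → ℤ)) : ENNReal :=
  if 0 ∈ P ∧ t ∈ P + Sf n then (P.card : ENNReal)⁻¹ else 0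

lemma mem_Pf {n : ℕ} {A : Set (Fin n → ℝ)} {a : Fin n → ℝ} {s : Fin n → ℤ} :
    s ∈ Pf A a ↔ IsS s ∧ a + emb s ∈ A := by
  simp [Pf, mem_Sf]

lemma isS_zero {n : ℕ} (hn : 4 ≤ n) : IsS (0 : Fin n → ℤ) := Or.inr (isX_zero hn)

lemma zero_mem_Pf {n : ℕ} (hn : 4 ≤ n) {A : Set (Fin n → ℝ)} {a : Fin n → ℝ} :
    0 ∈ Pf A a ↔ a ∈ A := by
  simp [mem_Pf, isS_zero hn, emb_zero]

lemma measurable_gw {n : ℕ} {A : Set (Fin n → ℝ)} (hA : MeasurableSet A) (t : Fin n → ℤ) :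
    Measurable (fun a => gw t (Pf A a)) := by
  let _ : MeasurableSpace (Finset (Fin n → ℤ)) := ⊤
  have h1 : Measurable (Pf A) := by
    refine measurable_to_countable' fun F => ?_
    have : Pf A ⁻¹' {F} = ⋂ s : Fin n → ℤ, {a | s ∈ Pf A a ↔ s ∈ F} := by
      ext a; simp [Finset.ext_iff]
    rw [this]
    refine MeasurableSet.iInter fun s => ?_
    have h2 : MeasurableSet {a | s ∈ Pf A a} := by
      by_cases hs : IsS s
      · simp only [mem_Pf, hs, true_and]
        exact (measurable_add_const (emb s)) hA
      · simp [mem_Pf, hs]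
    by_cases hs : s ∈ F
    · simpa [hs] using h2
    · simp only [hs, iff_false]
      exact h2.compl
  exact (measurable_from_top (f := gw t)).comp h1

open scoped Classical in
noncomputable def Tf (n : ℕ) : Finset (Fin n → ℤ) := Sf n + Sf n

lemma lower {n : ℕ} (hn : 4 ≤ n) {A : Set (Fin n → ℝ)} (hA : AvoidsOne n (DnNorm n) A)
    (a : Fin n → ℝ) (ha : a ∈ A) :
    ((3 * 2 ^ n + 4 * (n - 1) : ℕ) : ENNReal) ≤ 4 * ∑ t ∈ Tf n, gw t (Pf A a) := by
  classical
  have h0 : 0 ∈ Pf A a := (zero_mem_Pf hn).2 ha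
  have hcl := card_clique hn (Pf A a) (by
    intro u hu v hv
    rw [mem_Pf] at hu hv
    exact adj hn hA a 0 u v hu.2 hv.2 (by simpa using hu.1) (by simpa using hv.1))
  have hs : ∑ t ∈ Tf n, gw t (Pf A a) = ((Pf A a + Sf n).card : ENNReal) * ((Pf A a).card : ENNReal)⁻¹ := by
    simp only [gw, h0, true_and]
    rw [← Finset.sum_filter, Finset.sum_const, nsmul_eq_mul]
    congr 3
    ext t
    simp only [Finset.mem_filter, and_iff_right_iff_imp]
    intro ht
    have : Pf A a ⊆ Sf n := Finset.filter_subset _ _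
    have h3 : Pf A a + Sf n ⊆ Sf n + Sf n := Finset.add_subset_add_right this
    unfold Tf
    convert h3 ht
  rw [hs, ← mul_assoc, ← div_eq_mul_inv]
  have hc : (Pf A a).card ≠ 0 := Finset.card_ne_zero_of_mem h0
  rw [ENNReal.le_div_iff_mul_le (Or.inl (by exact_mod_cast hc)) (Or.inl (by simp))]
  rw [mul_comm]
  exact_mod_cast hcl

lemma upper {n : ℕ} (hn : 4 ≤ n) {A : Set (Fin n → ℝ)} (hA : AvoidsOne n (DnNorm n) A)
    (y : Fin n → ℝ) :
    ∑ t ∈ Tf n, gw t (Pf A (y - emb t)) ≤ 1 := by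
  classical
  set B := (Tf n).filter (fun t => 0 ∈ Pf A (y - emb t) ∧ t ∈ Pf A (y - emb t) + Sf n) with hB
  have hmem : ∀ t ∈ B, y + emb (-t) ∈ A ∧ ∃ c, IsS c ∧ y + emb c ∈ A ∧ IsS (-t - c) := by
    intro t ht
    rw [hB, Finset.mem_filter, zero_mem_Pf hn, Finset.mem_add] at ht
    obtain ⟨_, h1, s, hs, r, hr, hsr⟩ := ht
    rw [mem_Pf] at hs
    rw [mem_Sf] at hr
    refine ⟨by rwa [emb_neg, ← sub_eq_add_neg], s - t, ?_, ?_, ?_⟩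
    · have : s - t = -r := by rw [← hsr]; simp
      rw [this]; exact hr.neg
    · have : y + emb (s - t) = y - emb t + emb s := by rw [emb_sub]; abel
      rw [this]; exact hs.2
    · have : -t - (s - t) = -s := by abel
      rw [this]; exact hs.1.neg
  have hadj : ∀ t ∈ B, ∀ t' ∈ B, IsS (t - t') := by
    intro t ht t' ht'
    obtain ⟨h1, c, hc, hcA, htc⟩ := hmem t ht
    obtain ⟨h1', c', hc', hcA', htc'⟩ := hmem t' ht'
    have hcc : IsS (c' - c) := adj hn hA y 0 c' c hcA' hcA (by simpa using hc') (by simpa using hc)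
    have htc2 : IsS (-t - c') := adj hn hA y c _ _ h1 hcA' htc hcc
    have := adj hn hA y c' _ _ h1' h1 htc' htc2
    have e : -t' - -t = t - t' := by abel
    rwa [e] at this
  have hcard : ∀ t ∈ B, B.card ≤ (Pf A (y - emb t)).card := by
    intro t ht
    refine Finset.card_le_card_of_injOn (fun t' => t - t') ?_ ?_
    · intro t' ht'
      simp only [Finset.mem_coe, mem_Pf]
      refine ⟨hadj t ht t' ht', ?_⟩
      have : y - emb t + emb (t - t') = y + emb (-t') := by rw [emb_sub, emb_neg]; abel
      rw [this]; exact (hmem t' ht').1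
    · intro a _ b _ h
      simpa using h
  have : ∑ t ∈ Tf n, gw t (Pf A (y - emb t)) = ∑ t ∈ B, ((Pf A (y - emb t)).card : ENNReal)⁻¹ := by
    rw [hB, Finset.sum_filter]
    refine Finset.sum_congr rfl fun t _ => ?_
    unfold gw
    congr
  rw [this]
  calc _ ≤ ∑ t ∈ B, (B.card : ENNReal)⁻¹ :=
        Finset.sum_le_sum fun t ht => ENNReal.inv_le_inv.2 (by exact_mod_cast hcard t ht)
    _ = (B.card : ENNReal) * (B.card : ENNReal)⁻¹ := by rw [Finset.sum_const, nsmul_eq_mul]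
    _ ≤ 1 := ENNReal.mul_inv_le_one _

lemma box_eq (n : ℕ) (R : ℝ) : box n R = Set.Icc (fun _ => -R) (fun _ => R) := by
  ext x
  simp only [box, Set.mem_ofPred_eq, Set.mem_Icc, Pi.le_def, abs_le, forall_and]

lemma measurable_box (n : ℕ) (R : ℝ) : MeasurableSet (box n R) := by
  rw [box_eq]; exact measurableSet_Icc

lemma vol_box (n : ℕ) (R : ℝ) : volume (box n R) = ENNReal.ofReal (2 * R) ^ n := by
  rw [box_eq, Real.volume_Icc_pi]
  simp [two_mul]

lemma transport {n : ℕ} (hn : 4 ≤ n) {A : Set (Fin n → ℝ)} (hm : MeasurableSet A)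
    (hA : AvoidsOne n (DnNorm n) A) (R : ℝ) :
    ((3 * 2 ^ n + 4 * (n - 1) : ℕ) : ENNReal) * volume (A ∩ box n R) ≤
      4 * volume (box n (R + 1)) := by
  have hmb := measurable_box n R
  have hmg := fun t => measurable_gw (n := n) hm t
  have hT : ∀ t ∈ Tf n, ∀ y : Fin n → ℝ, y - emb t ∈ box n R → y ∈ box n (R + 1) := by
    classical
    intro t ht y hy i
    have ht : t ∈ Sf n + Sf n := by
      unfold Tf at ht
      convert ht
    rw [Finset.mem_add] at ht
    obtain ⟨u, hu, v, hv, rfl⟩ := ht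
    have h1 := bd_S (mem_Sf.1 hu) i
    have h2 := bd_S (mem_Sf.1 hv) i
    have h3 : (-4 : ℝ) ≤ ((u + v) i : ℤ) := by
      have : -4 ≤ (u + v) i := by simp only [Pi.add_apply]; omega
      exact_mod_cast this
    have h4 : (((u + v) i : ℤ) : ℝ) ≤ 4 := by
      have : (u + v) i ≤ 4 := by simp only [Pi.add_apply]; omega
      exact_mod_cast this
    have h5 := hy i
    simp only [Pi.sub_apply, emb] at h5
    rw [abs_le] at *
    constructor <;> linarith
  calc ((3 * 2 ^ n + 4 * (n - 1) : ℕ) : ENNReal) * volume (A ∩ box n R)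
      = ∫⁻ a in A ∩ box n R, ((3 * 2 ^ n + 4 * (n - 1) : ℕ) : ENNReal) := by
        rw [setLIntegral_const]
    _ ≤ ∫⁻ a in A ∩ box n R, 4 * ∑ t ∈ Tf n, gw t (Pf A a) :=
        setLIntegral_mono' (hm.inter hmb) fun a ha => lower hn hA a ha.1
    _ ≤ ∫⁻ a in box n R, 4 * ∑ t ∈ Tf n, gw t (Pf A a) :=
        lintegral_mono_set Set.inter_subset_right
    _ = 4 * ∑ t ∈ Tf n, ∫⁻ a in box n R, gw t (Pf A a) := by
        rw [lintegral_const_mul' _ _ (by simp), lintegral_finsetSum _ fun t _ => hmg t]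
    _ = 4 * ∑ t ∈ Tf n, ∫⁻ y, (box n R).indicator (fun a => gw t (Pf A a)) (y - emb t) := by
        congr 1
        refine Finset.sum_congr rfl fun t _ => ?_
        rw [lintegral_sub_right_eq_self (fun y => (box n R).indicator (fun a => gw t (Pf A a)) y),
          lintegral_indicator hmb]
    _ = 4 * ∫⁻ y, ∑ t ∈ Tf n, (box n R).indicator (fun a => gw t (Pf A a)) (y - emb t) := by
        rw [lintegral_finsetSum]
        intro t _
        exact ((hmg t).indicator hmb).comp (measurable_sub_const _)
    _ ≤ 4 * ∫⁻ y, (box n (R + 1)).indicator 1 y := by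
        gcongr with y
        by_cases hy : y ∈ box n (R + 1)
        · rw [Set.indicator_of_mem hy]
          refine le_trans (Finset.sum_le_sum fun t _ => ?_) (upper hn hA y)
          exact Set.indicator_le_self _ (fun a => gw t (Pf A a)) _
        · rw [Set.indicator_of_notMem hy]
          refine le_of_eq (Finset.sum_eq_zero fun t ht => ?_)
          exact Set.indicator_of_notMem (fun h => hy (hT t ht y h)) _
    _ = 4 * volume (box n (R + 1)) := by
        rw [lintegral_indicator_one (measurable_box n _)]

lemma density_le {n : ℕ} (hn : 4 ≤ n) {A : Set (Fin n → ℝ)} (hm : MeasurableSet A)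
    (hA : AvoidsOne n (DnNorm n) A) :
    density n A ≤ 1 / ((3 / 4) * 2 ^ n + (n : ℝ) - 1) := by
  have hn' : (4 : ℝ) ≤ n := by exact_mod_cast hn
  have hK : 0 < (3 / 4) * 2 ^ n + (n : ℝ) - 1 := by
    have : (0 : ℝ) < 2 ^ n := by positivity
    linarith
  set K := (3 / 4) * 2 ^ n + (n : ℝ) - 1
  have hvol : ∀ R : ℝ, 0 ≤ R → (volume (box n R)).toReal = (2 * R) ^ n := by
    intro R hR
    rw [vol_box, ENNReal.toReal_pow, ENNReal.toReal_ofReal (by positivity)]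
  have hbound : ∀ᶠ R : ℝ in atTop, (volume (A ∩ box n R)).toReal / (volume (box n R)).toReal ≤
      1 / K * (1 + 1 / R) ^ n := by
    filter_upwards [eventually_gt_atTop 0] with R hR
    have h := ENNReal.toReal_mono (by rw [vol_box]; finiteness) (transport hn hm hA R)
    rw [ENNReal.toReal_mul, ENNReal.toReal_mul, hvol _ (by positivity)] at h
    have e : ((3 * 2 ^ n + 4 * (n - 1) : ℕ) : ENNReal).toReal = 4 * K := by
      rw [ENNReal.toReal_natCast]
      push_cast [Nat.cast_sub (by omega : 1 ≤ n)]
      ring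
    rw [e] at h
    simp only [ENNReal.toReal_ofNat] at h
    rw [hvol _ hR.le, div_le_iff₀ (by positivity), mul_assoc, ← mul_pow]
    have e2 : (1 + 1 / R) * (2 * R) = 2 * (R + 1) := by field_simp
    rw [e2, one_div, inv_mul_eq_div, le_div_iff₀ hK]
    linarith
  have hlim : Tendsto (fun R : ℝ => 1 / K * (1 + 1 / R) ^ n) atTop (nhds (1 / K)) := by
    have h1 : Tendsto (fun R : ℝ => 1 / R) atTop (nhds 0) := by
      simpa using tendsto_inv_atTop_zero (𝕜 := ℝ)
    have := ((h1.const_add 1).pow n).const_mul (1 / K)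
    simpa using this
  unfold density
  rw [← hlim.limsup_eq]
  refine limsup_le_limsup hbound ?_ hlim.isBoundedUnder_le
  refine IsBoundedUnder.isCoboundedUnder_le ?_
  exact isBoundedUnder_of ⟨0, fun R => by positivity⟩

end DnProof

theorem m1_voronoi_Dn_upper_bound (n : ℕ) (hn : 4 ≤ n) :
    m1 n (DnNorm n) ≤ 1 / ((3 / 4) * 2 ^ n + (n : ℝ) - 1) := by
  have hn' : (4 : ℝ) ≤ n := by exact_mod_cast hn
  refine Real.sSup_le ?_ ?_
  · rintro d ⟨A, hm, hA, rfl⟩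
    exact DnProof.density_le hn hm hA
  · have : (0 : ℝ) < 2 ^ n := by positivity
    apply div_nonneg zero_le_one
    linarith
end
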